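/- arXiv:1109.1907 — 2 statements merged into one kernel-verified Lean document; each statement's English description precedes it below -/
import Mathlib

section
/- Let T : [0,L] → ℝ³ be continuous with ‖T(s)‖ = 1 for all s. In the Hilbert space H = L²(0,L;ℝ³), let V₀ = {g ∈ H : ∫₀ᴸ g = 0}, let D_I = {g ∈ V₀ : g(s)·T(s) = 0 for a.e. s}, and let D_E be the orthogonal complement of D_I inside V₀ (i.e. D_E = V₀ ∩ D_I^⊥). Then there exists a constant C > 0 (depending only on T and L) such that for every g ∈ D_E, ‖g‖_{L²(0,L;ℝ³)} ≤ C ‖g·T‖_{L²(0,L)}. In particular g ↦ ‖g·T‖_{L²} is a norm on D_E equivalent to the L² norm. -/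
/-!
Write `τ g = (g·T) T` for the pointwise orthogonal projection onto the tangent direction, `ι` for
the embedding of `ℝ³` into `L²` as constant functions, and `m = ι*`, which is integration. Then
`D_I = ker τ ∩ ker m`, and since `ι` has finite rank, the orthogonal complement of `D_I` inside
`ker τ` is the finite-dimensional space `W = {c - τ c : c ∈ ℝ³}`. Hence every `g ∈ D_E` splits as
`g = τ g + w` with `w ∈ W`. Integration is injective on `W`: if `w = c - τ c` has mean zero, then
`‖w‖² = ⟪w, c⟫ = 0`. So it is bounded below on `W`, and `m w = -m (τ g)` because `m g = 0`, which
bounds `‖w‖` by a multiple of `‖τ g‖ = ‖g·T‖`.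

This is Hilbert space geometry; `norm_le_of_finite_rank_constraint` carries it out abstractly for a
symmetric idempotent `τ`, and `tangentialPart` supplies the concrete one.
-/

open MeasureTheory Set Filter Metric intervalIntegral
open scoped Topology ENNReal RealInnerProductSpace

noncomputable section

/-- Abstract form of the estimate: `τ` is an orthogonal projection of a Hilbert space, and the
constraint `ι* g = 0` has finite rank. An element satisfying the constraint and orthogonal to the
constrained part of `ker τ` is controlled by its `τ`-component. -/
theorem norm_le_of_finite_rank_constraint {H E : Type*}
    [NormedAddCommGroup H] [InnerProductSpace ℝ H] [CompleteSpace H]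
    [NormedAddCommGroup E] [InnerProductSpace ℝ E] [CompleteSpace E] [FiniteDimensional ℝ E]
    (ι : E →L[ℝ] H) (τ : H →ₗ[ℝ] H) (hsymm : ∀ x y, ⟪τ x, y⟫ = ⟪x, τ y⟫)
    (hidem : ∀ x, τ (τ x) = τ x) :
    ∃ C > (0 : ℝ), ∀ g : H, ι.adjoint g = 0 →
      (∀ h : H, ι.adjoint h = 0 → τ h = 0 → ⟪g, h⟫ = 0) → ‖g‖ ≤ C * ‖τ g‖ := by
  let B : E →ₗ[ℝ] H := (LinearMap.id - τ) ∘ₗ ι.toLinearMap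
  have hB : ∀ c, B c = ι c - τ (ι c) := fun c => rfl
  have hτB : ∀ c, τ (B c) = 0 := fun c => by rw [hB, map_sub, hidem, sub_self]
  -- On `ker τ`, pairing with `B c` is pairing with `ι c`.
  have hBin : ∀ c h, τ h = 0 → ⟪B c, h⟫ = ⟪c, ι.adjoint h⟫ := fun c h hh => by
    rw [hB, inner_sub_left, hsymm, hh, inner_zero_right, sub_zero,
      ContinuousLinearMap.adjoint_inner_right]
  let W : Submodule ℝ H := LinearMap.range B
  let M : W →ₗ[ℝ] E := ι.adjoint.toLinearMap ∘ₗ W.subtype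
  have hM : LinearMap.ker M = ⊥ := by
    rw [LinearMap.ker_eq_bot']
    rintro ⟨_, c, rfl⟩ h
    have h' : ι.adjoint (B c) = 0 := h
    have h2 := hBin c (B c) (hτB c)
    rw [h', inner_zero_right, inner_self_eq_zero] at h2
    exact Subtype.ext h2
  obtain ⟨K, -, hK⟩ := M.exists_antilipschitzWith hM
  refine ⟨1 + K * ‖ι.adjoint‖, by positivity, fun g hg hperp => ?_⟩
  obtain ⟨w, hw, h, hh, hsum⟩ := W.exists_add_mem_mem_orthogonal (g - τ g)
  have hτw : τ w = 0 := by
    obtain ⟨c, rfl⟩ := hw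
    exact hτB c
  have hτh : τ h = 0 := by
    have := congrArg τ hsum
    rw [map_sub, hidem, sub_self, map_add, hτw, zero_add] at this
    exact this.symm
  have hmh : ι.adjoint h = 0 := by
    refine ext_inner_left ℝ fun c => ?_
    rw [← hBin c h hτh, inner_zero_right]
    exact hh _ ⟨c, rfl⟩
  have h0 : h = 0 := by
    have h1 : ⟪g - τ g, h⟫ = 0 := by
      rw [inner_sub_left, hperp h hmh hτh, hsymm, hτh, inner_zero_right, sub_zero]
    rwa [hsum, inner_add_left, hh w hw, zero_add, inner_self_eq_zero] at h1
  rw [h0, add_zero] at hsum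
  have hMw : ι.adjoint w = -ι.adjoint (τ g) := by rw [← hsum, map_sub, hg, zero_sub]
  have hbw : ‖w‖ ≤ K * ‖ι.adjoint w‖ := by
    simpa [M] using hK.le_mul_dist ⟨w, hw⟩ 0
  have hb : ‖ι.adjoint w‖ ≤ ‖ι.adjoint‖ * ‖τ g‖ := by
    rw [hMw, norm_neg]
    exact ι.adjoint.le_opNorm _
  calc ‖g‖ = ‖τ g + w‖ := by rw [← hsum, add_sub_cancel]
    _ ≤ ‖τ g‖ + ‖w‖ := norm_add_le _ _
    _ ≤ ‖τ g‖ + K * (‖ι.adjoint‖ * ‖τ g‖) := by gcongr; exact hbw.trans (by gcongr)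
    _ = (1 + K * ‖ι.adjoint‖) * ‖τ g‖ := by ring

section Tangential

variable {α F : Type*} [MeasurableSpace α] {μ : Measure α}
  [NormedAddCommGroup F] [InnerProductSpace ℝ F]

theorem memLp_tangential {T : α → F} (hT : AEStronglyMeasurable T μ) (hT1 : ∀ᵐ s ∂μ, ‖T s‖ = 1)
    (g : Lp F 2 μ) : MemLp (fun s => ⟪g s, T s⟫ • T s) 2 μ := by
  have hg := Lp.memLp g
  refine hg.of_le ((hg.1.inner hT).smul hT) ?_
  filter_upwards [hT1] with s hs
  rw [norm_smul, hs, mul_one]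
  simpa [hs] using norm_inner_le_norm (𝕜 := ℝ) (g s) (T s)

/-- The pointwise orthogonal projection `g ↦ (g·T) T` of `L²` fields along an almost everywhere
unit field `T`. -/
def tangentialPart {T : α → F} (hT : AEStronglyMeasurable T μ) (hT1 : ∀ᵐ s ∂μ, ‖T s‖ = 1) :
    Lp F 2 μ →ₗ[ℝ] Lp F 2 μ where
  toFun g := (memLp_tangential hT hT1 g).toLp _
  map_add' f g := by
    rw [← MemLp.toLp_add, MemLp.toLp_eq_toLp_iff]
    filter_upwards [Lp.coeFn_add f g] with s hs
    rw [hs, Pi.add_apply, Pi.add_apply, inner_add_left, add_smul]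
  map_smul' c g := by
    rw [RingHom.id_apply, ← MemLp.toLp_const_smul, MemLp.toLp_eq_toLp_iff]
    filter_upwards [Lp.coeFn_smul c g] with s hs
    simp [hs, real_inner_smul_left, mul_smul]

variable {T : α → F} (hT : AEStronglyMeasurable T μ) (hT1 : ∀ᵐ s ∂μ, ‖T s‖ = 1)

theorem coeFn_tangentialPart (g : Lp F 2 μ) :
    tangentialPart hT hT1 g =ᵐ[μ] fun s => ⟪g s, T s⟫ • T s :=
  MemLp.coeFn_toLp (memLp_tangential hT hT1 g)

theorem tangentialPart_symm (f g : Lp F 2 μ) :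
    ⟪tangentialPart hT hT1 f, g⟫ = ⟪f, tangentialPart hT hT1 g⟫ := by
  rw [L2.inner_def, L2.inner_def]
  refine integral_congr_ae ?_
  filter_upwards [coeFn_tangentialPart hT hT1 f, coeFn_tangentialPart hT hT1 g] with s h1 h2
  rw [h1, h2, real_inner_smul_left, real_inner_smul_right, real_inner_comm (g s), mul_comm]

theorem tangentialPart_idem (g : Lp F 2 μ) :
    tangentialPart hT hT1 (tangentialPart hT hT1 g) = tangentialPart hT hT1 g := by
  refine Lp.ext ?_
  filter_upwards [coeFn_tangentialPart hT hT1 g,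
    coeFn_tangentialPart hT hT1 (tangentialPart hT hT1 g), hT1] with s h1 h2 h3
  rw [h2, h1, real_inner_smul_left, real_inner_self_eq_norm_sq, h3, one_pow, mul_one]

theorem inner_eq_zero_of_tangentialPart_eq_zero {g : Lp F 2 μ}
    (hg : tangentialPart hT hT1 g = 0) : ∀ᵐ s ∂μ, ⟪g s, T s⟫ = 0 := by
  have h := coeFn_tangentialPart hT hT1 g
  rw [hg] at h
  filter_upwards [h, Lp.coeFn_zero F 2 μ, hT1] with s h1 h2 h3
  rw [h2] at h1
  have hne : T s ≠ 0 := norm_ne_zero_iff.mp (by rw [h3]; exact one_ne_zero)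
  exact (smul_eq_zero.mp h1.symm).resolve_right hne

theorem norm_tangentialPart (g : Lp F 2 μ) :
    ‖tangentialPart hT hT1 g‖ = Real.sqrt (∫ s, ⟪g s, T s⟫ ^ 2 ∂μ) := by
  rw [norm_eq_sqrt_real_inner, L2.inner_def]
  congr 1
  refine integral_congr_ae ?_
  filter_upwards [coeFn_tangentialPart hT hT1 g, hT1] with s h1 h2
  rw [h1, real_inner_self_eq_norm_sq, norm_smul, h2, mul_one, Real.norm_eq_abs, sq_abs]

end Tangential

/-- Integration is the adjoint of the embedding of constants into `L²`. -/
theorem adjoint_constL_apply {α F : Type*} [MeasurableSpace α] {μ : Measure α} [IsFiniteMeasure μ]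
    [NormedAddCommGroup F] [InnerProductSpace ℝ F] [CompleteSpace F] (g : Lp F 2 μ) :
    (Lp.constL 2 μ ℝ : F →L[ℝ] Lp F 2 μ).adjoint g = ∫ s, g s ∂μ := by
  refine ext_inner_left ℝ fun c => ?_
  rw [ContinuousLinearMap.adjoint_inner_right, L2.inner_def,
    ← integral_inner ((Lp.memLp g).integrable one_le_two)]
  refine integral_congr_ae ?_
  filter_upwards [Lp.coeFn_const 2 μ c] with s hs
  exact congrArg (fun v => ⟪v, g s⟫) hs

/-- Let `T : [0,L] → ℝ³` be continuous with `‖T(s)‖ = 1`.  In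
`H = L²(0,L;ℝ³)` let `V₀` be the mean-zero elements, `D_I = {g ∈ V₀ : g·T = 0 a.e.}` and
`D_E = V₀ ∩ D_I^⊥`.  Then there is `C > 0` (depending only on `T` and `L`) with
`‖g‖_{L²} ≤ C ‖g·T‖_{L²}` for every `g ∈ D_E`; in particular `g ↦ ‖g·T‖_{L²}` is a norm on
`D_E` equivalent to the `L²` norm. -/
theorem extensional_norm_equivalence
    (L : ℝ) (hL : 0 < L)
    (T : ℝ → EuclideanSpace ℝ (Fin 3))
    (hTcont : ContinuousOn T (Icc 0 L))
    (hT1 : ∀ s ∈ Icc 0 L, ‖T s‖ = 1) :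
    ∃ C > (0 : ℝ),
      ∀ g : Lp (EuclideanSpace ℝ (Fin 3)) 2 (volume.restrict (Ioo 0 L)),
        (∫ s, g s ∂(volume.restrict (Ioo 0 L))) = 0 →
        (∀ h : Lp (EuclideanSpace ℝ (Fin 3)) 2 (volume.restrict (Ioo 0 L)),
          (∫ s, h s ∂(volume.restrict (Ioo 0 L))) = 0 →
          (∀ᵐ s ∂(volume.restrict (Ioo 0 L)), ⟪h s, T s⟫ = 0) →
          ⟪g, h⟫ = 0) →
        ‖g‖ ≤ C * Real.sqrt (∫ s, ⟪g s, T s⟫ ^ 2 ∂(volume.restrict (Ioo 0 L))) := by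
  have hT : AEStronglyMeasurable T (volume.restrict (Ioo 0 L)) :=
    (hTcont.mono Ioo_subset_Icc_self).aestronglyMeasurable measurableSet_Ioo
  have hT1' : ∀ᵐ s ∂(volume.restrict (Ioo 0 L)), ‖T s‖ = 1 :=
    (ae_restrict_iff' measurableSet_Ioo).mpr
      (Eventually.of_forall fun s hs => hT1 s (Ioo_subset_Icc_self hs))
  obtain ⟨C, hC, hbound⟩ := norm_le_of_finite_rank_constraint
    (Lp.constL 2 (volume.restrict (Ioo 0 L)) ℝ) (tangentialPart hT hT1')
    (tangentialPart_symm hT hT1') (tangentialPart_idem hT hT1')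
  refine ⟨C, hC, fun g hg hperp => ?_⟩
  rw [← norm_tangentialPart hT hT1' g]
  refine hbound g ((adjoint_constL_apply g).trans hg) fun h hh hτ => ?_
  exact hperp h ((adjoint_constL_apply h).symm.trans hh)
    (inner_eq_zero_of_tangentialPart_eq_zero hT hT1' hτ)
end
end

section
/- Let T : [0,L] → ℝ³ be continuous with ‖T(s)‖ = 1 for all s. In H = L²(0,L;ℝ³), let V₀ = {g ∈ H : ∫₀ᴸ g = 0}, D_I = {g ∈ V₀ : g·T = 0 a.e.}, and D_E = V₀ ∩ D_I^⊥. Then the set { g − (g·T)T : g ∈ D_E } (the normal parts of extensional derivatives) is contained in a linear subspace of L²(0,L;ℝ³) of dimension at most 3. -/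
/-!
Let `N` be the closed subspace of `L²` fields that are pointwise orthogonal to `T`, and let `p i` be
the pointwise normal part of the constant field `e i`. For `h ∈ N` the number `⟪p i, h⟫` is the
`i`-th coordinate of `∫ h`, so a field in `N` has mean zero exactly when it is orthogonal to
`W = span {p 0, p 1, p 2}`.

For `g ∈ D_E` with normal part `n`, the field `h = n - P_W n` lies in `N` and is orthogonal to `W`,
hence lies in `D_I`. Therefore `0 = ⟪g, h⟫ = ⟪n, h⟫ = ‖h‖²`, so `n = P_W n ∈ W`.
-/

open MeasureTheory Set Filter Metric intervalIntegral
open scoped Topology ENNReal RealInnerProductSpace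

noncomputable section

/-- Euclidean three-space. -/
abbrev Space := EuclideanSpace ℝ (Fin 3)

/-- The component of the field `u` orthogonal to `T`, pointwise; it is the genuine orthogonal
projection only where `T` has norm one. -/
def normalPart (T u : ℝ → Space) (s : ℝ) : Space := u s - ⟪u s, T s⟫ • T s

lemma inner_normalPart_self {T : ℝ → Space} {s : ℝ} (hs : ‖T s‖ = 1) (u : ℝ → Space) :
    ⟪normalPart T u s, T s⟫ = 0 := by
  simp [normalPart, inner_sub_left, real_inner_smul_left, hs]

lemma memLp_normalPart {μ : Measure ℝ} {T u : ℝ → Space} (hTm : AEStronglyMeasurable T μ)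
    (hT : ∀ᵐ s ∂μ, ‖T s‖ = 1) (hu : MemLp u 2 μ) : MemLp (normalPart T u) 2 μ := by
  refine hu.sub (hu.mono ((hu.1.inner (𝕜 := ℝ) hTm).smul hTm) ?_)
  filter_upwards [hT] with s hs
  have h := norm_inner_le_norm (𝕜 := ℝ) (u s) (T s)
  rw [hs, mul_one] at h
  simpa [norm_smul, hs] using h

/-- Pairing with a normal field does not see the tangential part. -/
lemma inner_toLp_normalPart {μ : Measure ℝ} {T u : ℝ → Space} (hu : MemLp (normalPart T u) 2 μ)
    (h : Lp Space 2 μ) (hh : ∀ᵐ s ∂μ, ⟪h s, T s⟫ = 0) :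
    ⟪hu.toLp _, h⟫ = ∫ s, ⟪u s, h s⟫ ∂μ := by
  rw [L2.inner_def]
  refine integral_congr_ae ?_
  filter_upwards [hu.coeFn_toLp, hh] with s h1 h2
  rw [h1, normalPart, inner_sub_left, real_inner_smul_left, real_inner_comm (h s) (T s), h2]
  simp

/-- With `V₀`, `D_I`, `D_E` as in Lemma 4.3 of the paper (mean-zero `L²`
fields, those orthogonal a.e. to the unit field `T`, and the orthogonal complement of `D_I`
inside `V₀`), the set of normal parts `g − (g·T)T` of elements `g ∈ D_E` is contained in a
linear subspace of `L²(0,L;ℝ³)` of dimension at most `3`, i.e. it is contained in the span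
of three fixed functions. -/
theorem extensional_normal_parts_finite_dimensional
    (L : ℝ) (hL : 0 < L)
    (T : ℝ → EuclideanSpace ℝ (Fin 3))
    (hTcont : ContinuousOn T (Icc 0 L))
    (hT1 : ∀ s ∈ Icc 0 L, ‖T s‖ = 1) :
    ∃ v : Fin 3 → (ℝ → EuclideanSpace ℝ (Fin 3)),
      ∀ g : Lp (EuclideanSpace ℝ (Fin 3)) 2 (volume.restrict (Ioo 0 L)),
        (∫ s, g s ∂(volume.restrict (Ioo 0 L))) = 0 →
        (∀ h : Lp (EuclideanSpace ℝ (Fin 3)) 2 (volume.restrict (Ioo 0 L)),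
          (∫ s, h s ∂(volume.restrict (Ioo 0 L))) = 0 →
          (∀ᵐ s ∂(volume.restrict (Ioo 0 L)), ⟪h s, T s⟫ = 0) →
          ⟪g, h⟫ = 0) →
        ∃ a : Fin 3 → ℝ,
          ∀ᵐ s ∂(volume.restrict (Ioo 0 L)),
            g s - ⟪g s, T s⟫ • T s = a 0 • v 0 s + a 1 • v 1 s + a 2 • v 2 s := by
  set μ : Measure ℝ := volume.restrict (Ioo 0 L) with hμ
  have hTm : AEStronglyMeasurable T μ :=
    (hTcont.mono Ioo_subset_Icc_self).aestronglyMeasurable measurableSet_Ioo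
  have hT : ∀ᵐ s ∂μ, ‖T s‖ = 1 := by
    filter_upwards [ae_restrict_mem measurableSet_Ioo] with s hs
    exact hT1 s (Ioo_subset_Icc_self hs)
  let c : Fin 3 → ℝ → Space := fun i _ => EuclideanSpace.single i (1 : ℝ)
  have hc : ∀ i, MemLp (normalPart T (c i)) 2 μ := fun i =>
    memLp_normalPart hTm hT (memLp_const _)
  let p : Fin 3 → Lp Space 2 μ := fun i => (hc i).toLp _
  refine ⟨fun i => normalPart T (c i), fun g _ hgI => ?_⟩
  have hn : MemLp (normalPart T g) 2 μ := memLp_normalPart hTm hT (Lp.memLp g)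
  let n : Lp Space 2 μ := hn.toLp _
  let W : Submodule ℝ (Lp Space 2 μ) := Submodule.span ℝ (Set.range p)
  have : FiniteDimensional ℝ W := FiniteDimensional.span_of_finite ℝ (Set.finite_range p)
  obtain ⟨a, ha⟩ := (Submodule.mem_span_range_iff_exists_fun ℝ).1 (W.starProjection_apply_mem n)
  obtain ⟨h, hh⟩ : ∃ h : Lp Space 2 μ, h = n - W.starProjection n := ⟨_, rfl⟩
  have hWh : ∀ w ∈ W, ⟪w, h⟫ = 0 := fun w hw => by
    rw [hh]
    exact (Submodule.mem_orthogonal _ _).1 (W.sub_starProjection_mem_orthogonal n) w hw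
  have hexp : ∀ᵐ s ∂μ, h s = normalPart T g s - (a 0 • normalPart T (c 0) s
      + a 1 • normalPart T (c 1) s + a 2 • normalPart T (c 2) s) := by
    have e : h = n - (a 0 • p 0 + a 1 • p 1 + a 2 • p 2) := by
      rw [hh, ← ha, Fin.sum_univ_three]
    rw [e]
    filter_upwards [Lp.coeFn_sub n (a 0 • p 0 + a 1 • p 1 + a 2 • p 2),
      Lp.coeFn_add (a 0 • p 0 + a 1 • p 1) (a 2 • p 2), Lp.coeFn_add (a 0 • p 0) (a 1 • p 1),
      Lp.coeFn_smul (a 0) (p 0), Lp.coeFn_smul (a 1) (p 1), Lp.coeFn_smul (a 2) (p 2),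
      hn.coeFn_toLp, (hc 0).coeFn_toLp, (hc 1).coeFn_toLp, (hc 2).coeFn_toLp]
      with s h1 h2 h3 h4 h5 h6 h7 h8 h9 h10
    rw [h1, Pi.sub_apply, h2, Pi.add_apply, h3, Pi.add_apply, h4, h5, h6, Pi.smul_apply,
      Pi.smul_apply, Pi.smul_apply, h7, h8, h9, h10]
  have hhT : ∀ᵐ s ∂μ, ⟪h s, T s⟫ = 0 := by
    filter_upwards [hexp, hT] with s h1 h2
    simp [h1, inner_sub_left, inner_add_left, real_inner_smul_left, inner_normalPart_self h2]
  have hh0 : ∫ s, h s ∂μ = 0 := by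
    ext i
    have h1 : ⟪p i, h⟫ = 0 := hWh _ (Submodule.subset_span ⟨i, rfl⟩)
    rw [inner_toLp_normalPart (hc i) h hhT] at h1
    have hint : Integrable h μ := (Lp.memLp h).integrable (by norm_num)
    have h2 := integral_inner (𝕜 := ℝ) hint (EuclideanSpace.single i (1 : ℝ))
    rw [h1] at h2
    simpa [EuclideanSpace.inner_single_left] using h2.symm
  have hnh : ⟪n, h⟫ = 0 := by
    rw [inner_toLp_normalPart hn h hhT, ← L2.inner_def]
    exact hgI h hh0 hhT
  have hzero : h = 0 := by
    rw [← inner_self_eq_zero (𝕜 := ℝ)]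
    nth_rewrite 1 [hh]
    rw [inner_sub_left, hnh, hWh _ (W.starProjection_apply_mem n), sub_zero]
  refine ⟨a, ?_⟩
  rw [hzero] at hexp
  filter_upwards [hexp, Lp.coeFn_zero Space 2 μ] with s h1 h2
  rw [h2] at h1
  exact sub_eq_zero.1 h1.symm
end
end
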